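/- arXiv:2010.01879 — 3 statements merged into one kernel-verified Lean document; each statement's English description precedes it below -/
import Mathlib

section
/- Let n ≥ 3 be an odd integer and let 0 ≤ i < ⌊n/2⌋. Then for every 0 ≤ j < ⌊n/2⌋, the row vector Z_j = (e^{2πi(2j+1)k/n})_{0 ≤ k < n} satisfies Z_j · M_i(n) = λ_{i,j} · Z_j, where λ_{i,j} = 2cos((2j+1)(2i+1)π/(2n)) · e^{−i(2j+1)π/(2n)}. Moreover the all-ones row vector (1, 1, …, 1) satisfies (1, 1, …, 1) · M_i(n) = 0. -/
/-- The elementary matrix `M_i(n)`: the `n×n` complex matrix whose `(k,l)` entry is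
`(−1)^i` if `k − l ≡ i⌈n/2⌉ (mod n)`, `(−1)^{i+1}` if `k − l ≡ −(i+1)⌈n/2⌉ (mod n)`,
and `0` otherwise. -/
noncomputable def elemMat (n i : ℕ) : Matrix (Fin n) (Fin n) ℂ :=
  fun k l =>
    if ((k : ℤ) - (l : ℤ)) % n = ((i : ℤ) * (((n : ℤ) + 1) / 2)) % n then (-1 : ℂ) ^ i
    else if ((k : ℤ) - (l : ℤ)) % n = (-(((i : ℤ) + 1) * (((n : ℤ) + 1) / 2))) % n then
      (-1 : ℂ) ^ (i + 1)
    else 0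

/-!
For odd `n` the residue `h` of `⌈n/2⌉` is the inverse of `2` in `ℤ/n`, and `M_i(n)` is the circulant
matrix with entries `(-1)^i` and `(-1)^(i+1)` at the residues `ih` and `-(i+1)h`, which are distinct
because `n ∤ 2i+1`. An additive character `ψ` of `ℤ/n` is a left eigenvector of every circulant
matrix; here its eigenvalue is `u^i + u^(-(i+1))` with `u = -ψ(h)`. The trivial character has
`u = -1`, hence eigenvalue `0`. Writing `e(x) = exp(2π√-1 x)`, the row `Z_j` is the character
`x ↦ e((2j+1)x/n)`, for which `u = e(t)` with `t = (2j+1)/(2n)`, and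
`e(it) + e(-(i+1)t) = e(-t/2) * 2cos((2i+1)πt)`.
-/

open Matrix
open scoped Real

theorem addChar_vecMul_circulant {G R : Type*} [AddGroup G] [Fintype G] [CommSemiring R]
    (ψ : AddChar G R) (v : G → R) :
    ⇑ψ ᵥ* circulant v = (∑ d, ψ d * v d) • ⇑ψ := by
  ext l
  calc ∑ k, ψ k * v (k - l)
      = ∑ d, ψ (d + l) * v (d + l - l) :=
        (Equiv.sum_comp (Equiv.addRight l) fun k => ψ k * v (k - l)).symm
    _ = (∑ d, ψ d * v d) * ψ l := by
        rw [Finset.sum_mul]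
        refine Finset.sum_congr rfl fun d _ => ?_
        rw [add_sub_cancel_right, AddChar.map_add_eq_mul, mul_right_comm]

theorem zmod_finEquiv_apply (n : ℕ) [NeZero n] (k : Fin n) :
    ZMod.finEquiv n k = ((k : ℕ) : ZMod n) := by
  open Fin.CommRing in
  rw [← map_natCast (ZMod.finEquiv n), Fin.cast_val_eq_self]

theorem addChar_vecMul_circulant_submatrix {n : ℕ} [NeZero n] {R : Type*} [CommSemiring R]
    (ψ : AddChar (ZMod n) R) (v : ZMod n → R) :
    (fun k : Fin n => ψ (k : ℕ)) ᵥ*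
        (circulant v).submatrix (fun k : Fin n => ((k : ℕ) : ZMod n))
          (fun l : Fin n => ((l : ℕ) : ZMod n))
      = (∑ d, ψ d * v d) • fun k : Fin n => ψ (k : ℕ) := by
  simp only [← zmod_finEquiv_apply]
  have h := submatrix_vecMul_equiv (circulant v) (ψ ∘ ZMod.finEquiv n) (ZMod.finEquiv n).toEquiv
    (ZMod.finEquiv n)
  have hψ : (ψ ∘ ZMod.finEquiv n) ∘ (ZMod.finEquiv n).toEquiv.symm = ⇑ψ :=
    funext fun x => congrArg ψ ((ZMod.finEquiv n).apply_symm_apply x)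
  rw [hψ, addChar_vecMul_circulant] at h
  exact h

/-- The residue of `⌈n/2⌉` modulo `n`, which is the inverse of `2` when `n` is odd. -/
def ceilHalf (n : ℕ) : ZMod n := ((n + 1) / 2 : ℕ)

theorem two_mul_ceilHalf {n : ℕ} (hodd : Odd n) : 2 * ceilHalf n = 1 := by
  have h : 2 * ((n + 1) / 2) = n + 1 := Nat.two_mul_div_two_of_even hodd.add_one
  simpa [ceilHalf] using congrArg (Nat.cast : ℕ → ZMod n) h

theorem intCast_add_one_ediv_two (n : ℕ) :
    ((((n : ℤ) + 1) / 2 : ℤ) : ZMod n) = ceilHalf n :=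
  Int.cast_natCast _

theorem nsmul_ceilHalf_ne_neg_nsmul_ceilHalf {n i : ℕ} (hodd : Odd n) (hi : ¬ n ∣ 2 * i + 1) :
    i • ceilHalf n ≠ -((i + 1) • ceilHalf n) := by
  intro h
  have hzero : ((2 * i + 1 : ℕ) : ZMod n) = 0 := by
    simp only [nsmul_eq_mul] at h
    push_cast at h ⊢
    linear_combination 2 * h - (2 * (i : ZMod n) + 1) * two_mul_ceilHalf hodd
  exact hi ((ZMod.natCast_eq_zero_iff _ _).1 hzero)

theorem elemMat_eq_submatrix_circulant {n i : ℕ} (hodd : Odd n) (hi : ¬ n ∣ 2 * i + 1) :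
    elemMat n i =
      (circulant (Pi.single (i • ceilHalf n) ((-1) ^ i) +
        Pi.single (-((i + 1) • ceilHalf n)) ((-1) ^ (i + 1)))).submatrix
          (fun k : Fin n => ((k : ℕ) : ZMod n)) (fun l : Fin n => ((l : ℕ) : ZMod n)) := by
  ext k l
  have hfst : ((k : ℤ) - (l : ℤ)) % n = ((i : ℤ) * (((n : ℤ) + 1) / 2)) % n ↔
      ((k : ℕ) : ZMod n) - ((l : ℕ) : ZMod n) = i • ceilHalf n := by
    rw [← ZMod.intCast_eq_intCast_iff']
    simp [intCast_add_one_ediv_two]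
  have hsnd : ((k : ℤ) - (l : ℤ)) % n = (-(((i : ℤ) + 1) * (((n : ℤ) + 1) / 2))) % n ↔
      ((k : ℕ) : ZMod n) - ((l : ℕ) : ZMod n) = -((i + 1) • ceilHalf n) := by
    rw [← ZMod.intCast_eq_intCast_iff']
    simp [intCast_add_one_ediv_two]
  have hne := nsmul_ceilHalf_ne_neg_nsmul_ceilHalf hodd hi
  simp only [elemMat, submatrix_apply, circulant_apply, Pi.add_apply, Pi.single_apply, hfst, hsnd]
  split_ifs with h₁ h₂
  · exact absurd (h₁.symm.trans h₂) hne
  all_goals simp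

theorem addChar_vecMul_elemMat {n i : ℕ} (hodd : Odd n) (hi : ¬ n ∣ 2 * i + 1)
    (ψ : AddChar (ZMod n) ℂ) :
    (fun k : Fin n => ψ (k : ℕ)) ᵥ* elemMat n i
      = ((-ψ (ceilHalf n)) ^ i + (-ψ (ceilHalf n))⁻¹ ^ (i + 1)) • fun k : Fin n => ψ (k : ℕ) := by
  have : NeZero n := ⟨hodd.pos.ne'⟩
  rw [elemMat_eq_submatrix_circulant hodd hi, addChar_vecMul_circulant_submatrix]
  congr 1
  simp only [Pi.add_apply, mul_add, Finset.sum_add_distrib, Pi.single_apply, mul_ite, mul_zero,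
    Finset.sum_ite_eq', Finset.mem_univ, if_true, AddChar.map_neg_eq_inv,
    AddChar.map_nsmul_eq_pow]
  rw [← inv_pow, ← mul_pow, ← mul_pow, mul_neg_one, mul_neg_one, inv_neg]

section StdAddChar

open Complex ZMod

variable {n : ℕ} [NeZero n] {m : ℤ}

theorem mulShift_stdAddChar_natCast (k : ℕ) :
    AddChar.mulShift stdAddChar (m : ZMod n) k = exp (2 * π * I * m * k / n) := by
  have h := stdAddChar_coe (N := n) (m * k)
  push_cast at h
  rw [AddChar.mulShift_apply, h, mul_assoc _ _ (k : ℂ)]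

theorem neg_mulShift_stdAddChar_ceilHalf (hn : Odd n) (hm : Odd m) :
    -AddChar.mulShift stdAddChar (m : ZMod n) (ceilHalf n)
      = exp (2 * (m * π / (2 * n)) * I) := by
  obtain ⟨j, rfl⟩ := hm
  have hn_ne : (n : ℂ) ≠ 0 := NeZero.ne _
  have htwo : 2 * (((n + 1) / 2 : ℕ) : ℂ) = n + 1 :=
    mod_cast Nat.two_mul_div_two_of_even hn.add_one
  rw [ceilHalf, mulShift_stdAddChar_natCast, ← exp_add_pi_mul_I]
  refine exp_eq_exp_iff_exists_int.2 ⟨j + 1, ?_⟩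
  push_cast
  field_simp
  linear_combination (2 * (j : ℂ) + 1) * htwo

theorem exp_pow_add_inv_pow_succ (θ : ℂ) (i : ℕ) :
    exp (2 * θ * I) ^ i + (exp (2 * θ * I))⁻¹ ^ (i + 1)
      = 2 * Complex.cos ((2 * i + 1) * θ) * exp (-(θ * I)) := by
  rw [two_cos, add_mul, ← Complex.exp_neg, ← exp_nat_mul, ← exp_nat_mul, ← exp_add, ← exp_add]
  push_cast
  ring_nf

end StdAddChar

theorem elemMat_left_eigenvectors_general (n : ℕ) (hodd : Odd n) (i : ℕ)
    (hi : ¬ n ∣ 2 * i + 1) :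
    (∀ j : ℤ,
      (fun k : Fin n => Complex.exp (2 * π * Complex.I * (2 * j + 1) * (k : ℕ) / n)) ᵥ* elemMat n i
        = (2 * (Real.cos ((2 * j + 1) * (2 * i + 1) * π / (2 * n)) : ℂ) *
            Complex.exp (-(Complex.I * (2 * j + 1) * π / (2 * n)))) •
          fun k : Fin n => Complex.exp (2 * π * Complex.I * (2 * j + 1) * (k : ℕ) / n))
    ∧ (fun _ : Fin n => (1 : ℂ)) ᵥ* elemMat n i = 0 := by
  have : NeZero n := ⟨hodd.pos.ne'⟩
  constructor
  · intro j
    have h := addChar_vecMul_elemMat hodd hi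
      (AddChar.mulShift ZMod.stdAddChar ((2 * j + 1 : ℤ) : ZMod n))
    simp only [mulShift_stdAddChar_natCast, exp_pow_add_inv_pow_succ,
      neg_mulShift_stdAddChar_ceilHalf hodd (odd_two_mul_add_one j)] at h
    push_cast at h ⊢
    rw [h]
    congr 3 <;> ring_nf
  · simpa [pow_succ] using addChar_vecMul_elemMat hodd hi 1

/-- the rows `Z_j = (e^{2πi(2j+1)k/n})_k` are left eigenvectors of `M_i(n)`
with eigenvalue `2cos((2j+1)(2i+1)π/(2n))·e^{−i(2j+1)π/(2n)}`, and the all-ones row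
vector is a left eigenvector with eigenvalue `0`. -/
theorem elemMat_left_eigenvectors (n : ℕ) (hn : 3 ≤ n) (hodd : Odd n)
    (i : ℕ) (hi : i < n / 2) :
    (∀ j : ℕ, j < n / 2 →
      Matrix.vecMul
          (fun k : Fin n =>
            Complex.exp (2 * (Real.pi : ℂ) * Complex.I * (2 * (j : ℂ) + 1) * ((k : ℕ) : ℂ) / (n : ℂ)))
          (elemMat n i)
        = ((2 * (Real.cos ((2 * (j : ℝ) + 1) * (2 * (i : ℝ) + 1) * Real.pi / (2 * (n : ℝ))) : ℂ)) *
              Complex.exp (-(Complex.I * (2 * (j : ℂ) + 1) * (Real.pi : ℂ) / (2 * (n : ℂ))))) •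
          (fun k : Fin n =>
            Complex.exp (2 * (Real.pi : ℂ) * Complex.I * (2 * (j : ℂ) + 1) * ((k : ℕ) : ℂ) / (n : ℂ))))
    ∧ Matrix.vecMul (fun _ : Fin n => (1 : ℂ)) (elemMat n i) = 0 := by
  have h := elemMat_left_eigenvectors_general n hodd i
    (Nat.not_dvd_of_pos_of_lt (by omega) (by omega))
  exact ⟨fun j _ => mod_cast h.1 j, h.2⟩
end

section
/- For all integers j ≥ 0 and k ≥ 1, setting θ = (2j+1)π/(2(2k+1)), the following identity holds: (Σ_{i=0}^{k−1} 4(k−i)·cos((2i+1)θ)) · sin²(θ) = cos(θ). -/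
/-!
Multiplication by `4 sin² θ` acts on the sequence `cos ((2i+1)θ)` as a negated second difference.
Summing against the weights `k - i` amounts to taking partial sums twice, so the two differences
telescope away and leave `cos θ - cos ((2k+1)θ)`; there is no further boundary term at `i = 0`
because the terms at `i = -1` and `i = 0` agree. The angles `(2j+1)π/(2(2k+1))` are zeros
of `cos ((2k+1)θ)`.
-/

section

open Finset Complex

theorem sum_range_natCast_sub_mul {R : Type*} [Ring R] (a : ℕ → R) (n : ℕ) :
    ∑ i ∈ range n, ((n : R) - (i : R)) * a i = ∑ m ∈ range n, ∑ i ∈ range (m + 1), a i := by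
  induction n with
  | zero => simp
  | succ n ih =>
    have weight_succ (i : ℕ) :
        (((n + 1 : ℕ) : R) - (i : R)) * a i = ((n : R) - (i : R)) * a i + a i := by
      push_cast
      noncomm_ring
    simp only [weight_succ, sum_add_distrib]
    rw [sum_range_succ (fun i ↦ ((n : R) - (i : R)) * a i), sub_self, zero_mul, add_zero, ih,
      ← sum_range_succ (fun m ↦ ∑ i ∈ range (m + 1), a i)]

theorem two_mul_sin_mul_sum_cos_odd_mul (z : ℂ) (n : ℕ) :
    2 * sin z * ∑ i ∈ range n, cos ((2 * (i : ℂ) + 1) * z) =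
      sin (2 * (n : ℂ) * z) := by
  have sin_difference (i : ℕ) :
      2 * sin z * cos ((2 * (i : ℂ) + 1) * z) =
        sin (2 * ((i + 1 : ℕ) : ℂ) * z) - sin (2 * (i : ℂ) * z) := by
    have upper_angle : 2 * ((i + 1 : ℕ) : ℂ) * z = (2 * (i : ℂ) + 1) * z + z := by
      push_cast
      ring
    have lower_angle : 2 * (i : ℂ) * z = (2 * (i : ℂ) + 1) * z - z := by ring
    rw [upper_angle, lower_angle, sin_add, sin_sub]
    ring
  simp only [mul_sum, sin_difference]
  rw [sum_range_sub (fun i : ℕ ↦ sin (2 * (i : ℂ) * z))]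
  simp

theorem four_mul_sin_sq_mul_sum_cos_odd_mul (z : ℂ) (m : ℕ) :
    4 * sin z ^ 2 * ∑ i ∈ range (m + 1), cos ((2 * (i : ℂ) + 1) * z) =
      cos ((2 * (m : ℂ) + 1) * z) - cos ((2 * ((m + 1 : ℕ) : ℂ) + 1) * z) := by
  have lower_angle : (2 * (m : ℂ) + 1) * z = 2 * ((m + 1 : ℕ) : ℂ) * z - z := by
    push_cast
    ring
  have upper_angle : (2 * ((m + 1 : ℕ) : ℂ) + 1) * z = 2 * ((m + 1 : ℕ) : ℂ) * z + z := by ring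
  rw [lower_angle, upper_angle, cos_sub, cos_add]
  linear_combination 2 * sin z * two_mul_sin_mul_sum_cos_odd_mul z (m + 1)

theorem trig_sum_identity_general (k : ℕ) (z : ℂ) :
    (∑ i ∈ range k, 4 * ((k : ℂ) - (i : ℂ)) * cos ((2 * (i : ℂ) + 1) * z)) *
        sin z ^ 2 = cos z - cos ((2 * (k : ℂ) + 1) * z) := by
  calc
    _ = 4 * sin z ^ 2 *
          ∑ i ∈ range k, ((k : ℂ) - (i : ℂ)) * cos ((2 * (i : ℂ) + 1) * z) := by
      simp only [mul_assoc, ← mul_sum]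
      ring
    _ = ∑ m ∈ range k, 4 * sin z ^ 2 *
          ∑ i ∈ range (m + 1), cos ((2 * (i : ℂ) + 1) * z) := by
      rw [sum_range_natCast_sub_mul, mul_sum]
    _ = ∑ m ∈ range k, (cos ((2 * (m : ℂ) + 1) * z) -
          cos ((2 * ((m + 1 : ℕ) : ℂ) + 1) * z)) := by
      simp only [four_mul_sin_sq_mul_sum_cos_odd_mul]
    _ = cos z - cos ((2 * (k : ℂ) + 1) * z) := by
      rw [sum_range_sub' (fun m : ℕ ↦ cos ((2 * (m : ℂ) + 1) * z))]
      simp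

theorem cos_odd_mul_odd_mul_pi_div_eq_zero (j : ℤ) (k : ℕ) :
    cos ((2 * (k : ℂ) + 1) * ((2 * (j : ℂ) + 1) * Real.pi / (2 * (2 * (k : ℂ) + 1)))) = 0 := by
  have odd_ne_zero : 2 * (k : ℂ) + 1 ≠ 0 := by exact_mod_cast Nat.succ_ne_zero (2 * k)
  refine cos_eq_zero_iff.mpr ⟨j, ?_⟩
  field_simp

end

/-- for all integers `j ≥ 0`, `k ≥ 1` and `θ = (2j+1)π/(2(2k+1))`,
`(Σ_{i=0}^{k−1} 4(k−i)cos((2i+1)θ)) · sin²θ = cos θ`. -/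
theorem trig_sum_identity (j k : ℕ) (hk : 1 ≤ k) (θ : ℝ)
    (hθ : θ = (2 * (j : ℝ) + 1) * Real.pi / (2 * (2 * (k : ℝ) + 1))) :
    (∑ i ∈ Finset.range k, 4 * ((k : ℝ) - (i : ℝ)) * Real.cos ((2 * (i : ℝ) + 1) * θ)) *
        Real.sin θ ^ 2 = Real.cos θ := by
  have cos_eq_zero := cos_odd_mul_odd_mul_pi_div_eq_zero j k
  have telescoped := trig_sum_identity_general k (θ : ℂ)
  subst hθ
  push_cast at cos_eq_zero telescoped
  rw [cos_eq_zero, sub_zero] at telescoped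
  exact_mod_cast telescoped
end

section
/- Let n ≥ 7 be an odd integer and write n = 2k+1 (so k ≥ 3). Then for j = 0 and for j = 1, the quantity |λ_j(n)| := Σ_{i=0}^{k−1} (n − (2i+1)) · 2cos((2j+1)(2i+1)π/(2n)) is strictly greater than 1. -/
/-!
Since `n - (2i + 1) = 2(k - i)` for `n = 2k + 1`, the sum is a Fejér-type sum of odd cosines:
multiplying by `sin θ` twice telescopes it to `cos θ - cos (nθ)`. At the odd multiples `θ` of
`π / (2n)` the last term vanishes, so `|λ_j(n)| = cos θ / sin² θ`, and this exceeds `1` as soon as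
`θ ≤ π / 4`, that is, `2(2j + 1) ≤ n`.
-/

open Finset Real

theorem sum_two_mul_cos_odd_mul_mul_sin (θ : ℝ) (m : ℕ) :
    (∑ i ∈ range m, 2 * cos ((2 * (i : ℝ) + 1) * θ)) * sin θ = sin (2 * m * θ) := by
  induction m with
  | zero => simp
  | succ m ih =>
    have telescope : 2 * sin θ * cos ((2 * (m : ℝ) + 1) * θ) =
        sin (2 * ((m + 1 : ℕ) : ℝ) * θ) - sin (2 * m * θ) := by
      rw [two_mul_sin_mul_cos, sub_eq_add_neg (sin _), ← sin_neg, add_comm]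
      push_cast
      ring_nf
    rw [sum_range_succ, add_mul, ih]
    linear_combination telescope

theorem sum_sub_odd_mul_two_mul_cos_odd_mul_mul_sin_sq (θ : ℝ) (m : ℕ) :
    (∑ i ∈ range m, (2 * (m : ℝ) + 1 - (2 * i + 1)) * (2 * cos ((2 * (i : ℝ) + 1) * θ))) *
      sin θ ^ 2 = cos θ - cos ((2 * m + 1) * θ) := by
  induction m with
  | zero => simp
  | succ m ih =>
    -- Raising `m` by one adds `2` to every weight, and the new summand had weight `0` before.
    have raise_weights :
        ∑ i ∈ range (m + 1), (2 * ((m + 1 : ℕ) : ℝ) + 1 - (2 * i + 1)) *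
            (2 * cos ((2 * (i : ℝ) + 1) * θ)) =
          ∑ i ∈ range m, (2 * (m : ℝ) + 1 - (2 * i + 1)) * (2 * cos ((2 * (i : ℝ) + 1) * θ)) +
            2 * ∑ i ∈ range (m + 1), 2 * cos ((2 * (i : ℝ) + 1) * θ) := by
      rw [sum_range_succ, sum_range_succ _ m, mul_add, ← add_assoc, mul_sum, ← sum_add_distrib]
      push_cast
      congr 1
      · exact sum_congr rfl fun i _ ↦ by ring
      · ring
    have telescope : 2 * sin (2 * ((m + 1 : ℕ) : ℝ) * θ) * sin θ =
        cos ((2 * m + 1) * θ) - cos ((2 * ((m + 1 : ℕ) : ℝ) + 1) * θ) := by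
      rw [two_mul_sin_mul_sin]
      push_cast
      ring_nf
    rw [raise_weights, add_mul, ih]
    linear_combination
      2 * sin θ * sum_two_mul_cos_odd_mul_mul_sin θ (m + 1) + telescope

theorem cos_mul_odd_mul_pi_div_two_mul_eq_zero {x : ℝ} (hx : x ≠ 0) (j : ℤ) :
    cos (x * ((2 * j + 1) * π / (2 * x))) = 0 :=
  cos_eq_zero_iff.mpr ⟨j, by field_simp⟩

theorem sin_sq_lt_cos_of_abs_le_pi_div_four {θ : ℝ} (hθ : |θ| ≤ π / 4) : sin θ ^ 2 < cos θ := by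
  have sqrt_two_div_two_le_cos : √2 / 2 ≤ cos θ := by
    rw [← cos_pi_div_four, ← cos_abs θ]
    exact cos_le_cos_of_nonneg_of_le_pi (abs_nonneg θ) (by linarith [pi_pos]) hθ
  calc
    sin θ ^ 2 = 1 - cos θ ^ 2 := sin_sq θ
    _ ≤ 1 - (√2 / 2) ^ 2 := by gcongr
    _ = 1 / 2 := by rw [div_pow, sq_sqrt zero_le_two]; norm_num
    _ < √2 / 2 := by linarith [one_lt_sqrt_two]
    _ ≤ cos θ := sqrt_two_div_two_le_cos

theorem subRosa_eigenvalues_gt_one_general (n k j : ℕ) (hn : n = 2 * k + 1) (hj : 2 * j + 1 ≤ k) :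
    1 < ∑ i ∈ range k, ((n : ℝ) - (2 * (i : ℝ) + 1)) *
      (2 * cos ((2 * (j : ℝ) + 1) * (2 * (i : ℝ) + 1) * π / (2 * (n : ℝ)))) := by
  have n_eq : (n : ℝ) = 2 * k + 1 := by exact_mod_cast hn
  have n_pos : (0 : ℝ) < n := by rw [n_eq]; positivity
  have odd_le : 2 * (2 * (j : ℝ) + 1) ≤ n := by exact_mod_cast (by lia : 2 * (2 * j + 1) ≤ n)
  set θ : ℝ := (2 * j + 1) * π / (2 * n) with θ_def
  have cos_n_mul : cos ((2 * k + 1) * θ) = 0 := by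
    simpa [θ_def, n_eq] using cos_mul_odd_mul_pi_div_two_mul_eq_zero n_pos.ne' j
  have abs_θ_le : |θ| ≤ π / 4 := by
    rw [abs_of_pos (by positivity), θ_def, div_le_div_iff₀ (by positivity) (by norm_num)]
    linarith [mul_le_mul_of_nonneg_right odd_le pi_pos.le]
  have sin_θ_pos : 0 < sin θ :=
    sin_pos_of_pos_of_lt_pi (by positivity) (by linarith [le_abs_self θ, pi_pos])
  have closed_form := sum_sub_odd_mul_two_mul_cos_odd_mul_mul_sin_sq θ k
  rw [cos_n_mul, sub_zero] at closed_form
  calc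
    1 < cos θ / sin θ ^ 2 :=
      (one_lt_div (by positivity)).mpr (sin_sq_lt_cos_of_abs_le_pi_div_four abs_θ_le)
    _ = ∑ i ∈ range k, (2 * (k : ℝ) + 1 - (2 * i + 1)) * (2 * cos ((2 * (i : ℝ) + 1) * θ)) :=
      (eq_div_of_mul_eq (by positivity) closed_form).symm
    _ = _ := by
      refine sum_congr rfl fun i _ ↦ ?_
      rw [n_eq, θ_def, n_eq]
      ring_nf

/-- for odd `n = 2k+1 ≥ 7`, the moduli of the Sub Rosa eigenvalues
`|λ_j(n)| = Σ_{i=0}^{k−1} (n−(2i+1))·2cos((2j+1)(2i+1)π/(2n))` exceed `1` for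
`j = 0` and `j = 1`. -/
theorem subRosa_eigenvalues_gt_one (n k : ℕ) (hn : n = 2 * k + 1) (hk : 3 ≤ k) :
    ∀ j : ℕ, j ≤ 1 →
      1 < ∑ i ∈ Finset.range k,
            ((n : ℝ) - (2 * (i : ℝ) + 1)) *
              (2 * Real.cos ((2 * (j : ℝ) + 1) * (2 * (i : ℝ) + 1) * Real.pi / (2 * (n : ℝ)))) :=
  fun j hj ↦ subRosa_eigenvalues_gt_one_general n k j hn (by lia)
end
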